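/- arXiv:2510.27396 — 6 statements merged into one kernel-verified Lean document; each statement's English description precedes it below -/
import Mathlib

section
/- Let f : ℝ^{n_x} → ℝ and g : ℝ^{n_x̄} → ℝ, and define the augmented Lagrangian L(x, x̄, z, y) = f(x) + g(x̄) + yᵀ(Ax + Bx̄ + z − b) + (ρ/2)‖Ax + Bx̄ + z − b‖² + λᵀz + (β/2)‖z‖². Fix x, x̄, z, y with λ + β·z + y = 0, let s = Ax + Bx̄ − b, and let z⁺ = −(ρ/(ρ+β))·(s + y/ρ) − (1/(ρ+β))·λ and y⁺ = y + ρ·(s + z⁺). Then L(x, x̄, z⁺, y⁺) − L(x, x̄, z, y) ≤ −(ρ/2 − β²/ρ)·‖z⁺ − z‖². -/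
open RealInnerProductSpace

/-- Under the dual-slack identity `λ + βz + y = 0`, the z- and y-updates of
the inner ADMM iteration decrease the augmented Lagrangian by at least
`(ρ/2 − β²/ρ)‖z⁺ − z‖²`. -/
theorem z_y_update_decrease {nx nxb m : ℕ}
    (f : EuclideanSpace ℝ (Fin nx) → ℝ) (g : EuclideanSpace ℝ (Fin nxb) → ℝ)
    (A : EuclideanSpace ℝ (Fin nx) →L[ℝ] EuclideanSpace ℝ (Fin m))
    (B : EuclideanSpace ℝ (Fin nxb) →L[ℝ] EuclideanSpace ℝ (Fin m))
    (b : EuclideanSpace ℝ (Fin m)) (lam : EuclideanSpace ℝ (Fin m))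
    (ρ β : ℝ) (hρ : 0 < ρ) (hβ : 0 < β)
    (L : EuclideanSpace ℝ (Fin nx) → EuclideanSpace ℝ (Fin nxb) →
      EuclideanSpace ℝ (Fin m) → EuclideanSpace ℝ (Fin m) → ℝ)
    (hL : ∀ x xbar z y, L x xbar z y =
      f x + g xbar + ⟪y, A x + B xbar + z - b⟫ +
        (ρ / 2) * ‖A x + B xbar + z - b‖ ^ 2 + ⟪lam, z⟫ + (β / 2) * ‖z‖ ^ 2)
    (x : EuclideanSpace ℝ (Fin nx)) (xbar : EuclideanSpace ℝ (Fin nxb))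
    (z y : EuclideanSpace ℝ (Fin m))
    (hdual : lam + β • z + y = 0)
    (s : EuclideanSpace ℝ (Fin m)) (hs : s = A x + B xbar - b)
    (zp : EuclideanSpace ℝ (Fin m))
    (hzp : zp = -((ρ / (ρ + β)) • (s + ρ⁻¹ • y)) - (ρ + β)⁻¹ • lam)
    (yp : EuclideanSpace ℝ (Fin m))
    (hyp : yp = y + ρ • (s + zp)) :
    L x xbar zp yp - L x xbar z y ≤ -(ρ / 2 - β ^ 2 / ρ) * ‖zp - z‖ ^ 2 := by
  have hne : ρ + β ≠ 0 := by positivity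
  have hρ0 : ρ ≠ 0 := hρ.ne'
  obtain ⟨d, hd⟩ : ∃ d, d = zp - z := ⟨_, rfl⟩
  have hlam : lam = -(β • z) - y := by
    rw [← sub_eq_zero, ← hdual]; abel
  have h1 : s + zp = (-(β / ρ)) • d := by
    rw [hd]
    ext i
    have e1 := congrArg (fun v : EuclideanSpace ℝ (Fin m) => v i) hzp
    have e2 := congrArg (fun v : EuclideanSpace ℝ (Fin m) => v i) hlam
    simp at e1 e2 ⊢
    rw [e2] at e1
    field_simp at e1 ⊢
    linarith
  have hz : zp = z + d := by rw [hd]; abel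
  have h2 : s + z = (-(β / ρ) - 1) • d := by
    rw [sub_smul, ← h1, hz, one_smul]; abel
  have e1 : A x + B xbar + zp - b = (-(β / ρ)) • d := by rw [← h1, hs]; abel
  have e2 : A x + B xbar + z - b = (-(β / ρ) - 1) • d := by rw [← h2, hs]; abel
  rw [hL, hL, e1, e2, hyp, h1, ← hd, hlam, hz]
  simp only [← real_inner_self_eq_norm_sq, inner_add_left, inner_add_right, inner_sub_left,
    inner_sub_right, inner_neg_left, real_inner_smul_left, real_inner_smul_right]
  rw [real_inner_comm z d]
  have hdd : 0 ≤ ⟪d, d⟫ := real_inner_self_nonneg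
  have hk : 0 ≤ β * ⟪d, d⟫ := by positivity
  obtain ⟨c, hc⟩ : ∃ c, c = β / ρ := ⟨_, rfl⟩
  have hb : β = c * ρ := by rw [hc]; field_simp
  have hb2 : β ^ 2 / ρ = c ^ 2 * ρ := by rw [hc]; field_simp
  rw [hb2, ← hc]
  rw [hb] at hk ⊢
  nlinarith
end

section
/- Let f : ℝ^{n_x} → ℝ and g : ℝ^{n_x̄} → ℝ, and define the augmented Lagrangian L(x, x̄, z, y) = f(x) + g(x̄) + yᵀ(Ax + Bx̄ + z − b) + (ρ/2)‖Ax + Bx̄ + z − b‖² + λᵀz + (β/2)‖z‖². Fix x, x̄, z, y with λ + β·z + y = 0, let s = Ax + Bx̄ − b, set ρ = 2β with β > 0, and let z⁺ = −(ρ/(ρ+β))·(s + y/ρ) − (1/(ρ+β))·λ and y⁺ = y + ρ·(s + z⁺). Then L(x, x̄, z⁺, y⁺) − L(x, x̄, z, y) ≤ −(β/2)·‖z⁺ − z‖². -/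
open RealInnerProductSpace

/-- Under the dual-slack identity `λ + βz + y = 0` and the algorithmic choice
`ρ = 2β`, the z- and y-updates of the inner ADMM iteration decrease the augmented
Lagrangian by at least `(β/2)‖z⁺ − z‖²`. -/
theorem z_y_update_decrease_rho_eq_two_beta {nx nxb m : ℕ}
    (f : EuclideanSpace ℝ (Fin nx) → ℝ) (g : EuclideanSpace ℝ (Fin nxb) → ℝ)
    (A : EuclideanSpace ℝ (Fin nx) →L[ℝ] EuclideanSpace ℝ (Fin m))
    (B : EuclideanSpace ℝ (Fin nxb) →L[ℝ] EuclideanSpace ℝ (Fin m))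
    (b : EuclideanSpace ℝ (Fin m)) (lam : EuclideanSpace ℝ (Fin m))
    (ρ β : ℝ) (hβ : 0 < β) (hρβ : ρ = 2 * β)
    (L : EuclideanSpace ℝ (Fin nx) → EuclideanSpace ℝ (Fin nxb) →
      EuclideanSpace ℝ (Fin m) → EuclideanSpace ℝ (Fin m) → ℝ)
    (hL : ∀ x xbar z y, L x xbar z y =
      f x + g xbar + ⟪y, A x + B xbar + z - b⟫ +
        (ρ / 2) * ‖A x + B xbar + z - b‖ ^ 2 + ⟪lam, z⟫ + (β / 2) * ‖z‖ ^ 2)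
    (x : EuclideanSpace ℝ (Fin nx)) (xbar : EuclideanSpace ℝ (Fin nxb))
    (z y : EuclideanSpace ℝ (Fin m))
    (hdual : lam + β • z + y = 0)
    (s : EuclideanSpace ℝ (Fin m)) (hs : s = A x + B xbar - b)
    (zp : EuclideanSpace ℝ (Fin m))
    (hzp : zp = -((ρ / (ρ + β)) • (s + ρ⁻¹ • y)) - (ρ + β)⁻¹ • lam)
    (yp : EuclideanSpace ℝ (Fin m))
    (hyp : yp = y + ρ • (s + zp)) :
    L x xbar zp yp - L x xbar z y ≤ -(β / 2) * ‖zp - z‖ ^ 2 := by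
  subst hρβ
  have hlam : lam = -(β • z) - y := by
    have h : lam - (-(β • z) - y) = lam + β • z + y := by abel
    exact sub_eq_zero.mp (h.trans hdual)
  have hb : β ≠ 0 := hβ.ne'
  obtain ⟨d, hd⟩ : ∃ d, d = zp - z := ⟨_, rfl⟩
  have hzd : zp = z + d := by rw [hd]; abel
  have hs2 : s = -z - (3 / 2 : ℝ) • d := by
    rw [hd, hzp, hlam]
    ext i
    simp
    field_simp
    ring
  have e1 : A x + B xbar + zp - b = -((1 / 2 : ℝ) • d) := by
    have : A x + B xbar + zp - b = s + zp := by rw [hs]; abel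
    rw [this, hs2, hzd]; module
  have e2 : A x + B xbar + z - b = -((3 / 2 : ℝ) • d) := by
    have : A x + B xbar + z - b = s + z := by rw [hs]; abel
    rw [this, hs2]; module
  have e3 : yp = y - β • d := by
    rw [hyp, hs2, hzd]; module
  rw [hL, hL, e1, e2, e3, ← hd, hzd, hlam]
  simp only [← real_inner_self_eq_norm_sq, inner_add_left, inner_add_right, inner_sub_left,
    inner_neg_left, inner_neg_right, real_inner_smul_left, real_inner_smul_right]
  have hc := real_inner_comm z d
  have hp : 0 ≤ β * ⟪d, d⟫ := mul_nonneg hβ.le real_inner_self_nonneg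
  rw [hc]
  nlinarith [hp]
end

section
/- Let g : ℝ^{n_x̄} → ℝ be convex and differentiable, let B ∈ ℝ^{m×n_x̄}, w, u ∈ ℝ^m, ρ > 0, and define φ(x̄) = g(x̄) + wᵀ(Bx̄) + (ρ/2)‖Bx̄ + u‖². If x̄⁺ is a global minimizer of φ, then for every x̄ ∈ ℝ^{n_x̄}, φ(x̄⁺) ≤ φ(x̄) − (ρ/2)·‖B(x̄⁺ − x̄)‖². -/
open RealInnerProductSpace

/-- If `g` is convex and differentiable and `x̄⁺` is a global minimizer of
`φ(x̄) = g(x̄) + wᵀ(Bx̄) + (ρ/2)‖Bx̄ + u‖²`, then for every `x̄`,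
`φ(x̄⁺) ≤ φ(x̄) − (ρ/2)‖B(x̄⁺ − x̄)‖²`. -/
theorem xbar_update_decrease {nxb m : ℕ}
    (g : EuclideanSpace ℝ (Fin nxb) → ℝ)
    (hgconv : ConvexOn ℝ Set.univ g) (hgdiff : Differentiable ℝ g)
    (B : EuclideanSpace ℝ (Fin nxb) →L[ℝ] EuclideanSpace ℝ (Fin m))
    (w u : EuclideanSpace ℝ (Fin m)) (ρ : ℝ) (hρ : 0 < ρ)
    (φ : EuclideanSpace ℝ (Fin nxb) → ℝ)
    (hφ : ∀ xbar, φ xbar = g xbar + ⟪w, B xbar⟫ + (ρ / 2) * ‖B xbar + u‖ ^ 2)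
    (xbarp : EuclideanSpace ℝ (Fin nxb))
    (hmin : ∀ xbar, φ xbarp ≤ φ xbar) :
    ∀ xbar, φ xbarp ≤ φ xbar - (ρ / 2) * ‖B (xbarp - xbar)‖ ^ 2 := by
  intro x
  have key : ∀ t : ℝ, 0 < t → t ≤ 1 →
      0 ≤ φ x - φ xbarp - (1 - t) * ((ρ / 2) * ‖B (xbarp - x)‖ ^ 2) := by
    intro t ht ht1
    have h1 := hmin ((1 - t) • xbarp + t • x)
    have h2 := hgconv.2 (Set.mem_univ xbarp) (Set.mem_univ x)
      (by linarith : (0 : ℝ) ≤ 1 - t) ht.le (by ring)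
    have h3 : ‖B ((1 - t) • xbarp + t • x) + u‖ ^ 2
        = (1 - t) * ‖B xbarp + u‖ ^ 2 + t * ‖B x + u‖ ^ 2
          - t * (1 - t) * ‖B (xbarp - x)‖ ^ 2 := by
      have e1 : B ((1 - t) • xbarp + t • x) + u
          = (1 - t) • (B xbarp + u) + t • (B x + u) := by
        rw [map_add, map_smul, map_smul]
        module
      have e2 : B (xbarp - x) = (B xbarp + u) - (B x + u) := by
        rw [map_sub]
        abel
      rw [e1, e2, norm_add_sq_real, norm_sub_sq_real, norm_smul, norm_smul, mul_pow, mul_pow,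
        real_inner_smul_left, real_inner_smul_right, Real.norm_eq_abs, Real.norm_eq_abs,
        sq_abs, sq_abs]
      ring
    have h4 : ⟪w, B ((1 - t) • xbarp + t • x)⟫ = (1 - t) * ⟪w, B xbarp⟫ + t * ⟪w, B x⟫ := by
      rw [map_add, map_smul, map_smul, inner_add_right, real_inner_smul_right,
        real_inner_smul_right]
    rw [hφ ((1 - t) • xbarp + t • x), h3, h4] at h1
    simp only [smul_eq_mul] at h2
    have h5 : 0 ≤ t * (φ x - φ xbarp - (1 - t) * ((ρ / 2) * ‖B (xbarp - x)‖ ^ 2)) := by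
      have hp := hφ xbarp
      have hx := hφ x
      rw [hx]
      have : t * φ xbarp = φ xbarp - (1 - t) * φ xbarp := by ring
      have h6 : (1 - t) * φ xbarp = (1 - t) * (g xbarp + ⟪w, B xbarp⟫
        + (ρ / 2) * ‖B xbarp + u‖ ^ 2) := by rw [hp]
      linarith
    exact nonneg_of_mul_nonneg_right h5 ht
  have hc : 0 ≤ (ρ / 2) * ‖B (xbarp - x)‖ ^ 2 := by positivity
  generalize (ρ / 2) * ‖B (xbarp - x)‖ ^ 2 = c at key hc ⊢
  by_contra hcon
  obtain ⟨K, hK⟩ : ∃ K, K = φ xbarp - φ x + c := ⟨_, rfl⟩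
  have hKpos : 0 < K := by linarith
  have hs : 0 < c + K := by linarith
  have h := key (K / (c + K)) (by positivity) (by rw [div_le_one hs]; linarith)
  have e : K / (c + K) * c = K - K * (K / (c + K)) := by
    field_simp
    ring
  have hp : 0 < K * (K / (c + K)) := by positivity
  linarith
end

section
/- Let f : ℝ^{n_x} → ℝ and g : ℝ^{n_x̄} → ℝ, and define the augmented Lagrangian L(x, x̄, z, y) = f(x) + g(x̄) + yᵀ(Ax + Bx̄ + z − b) + (ρ/2)‖Ax + Bx̄ + z − b‖² + λᵀz + (β/2)‖z‖², and v(w; λ, β) = λᵀw + (β/2)‖w‖². Suppose ρ ≥ β > 0 and λ + β·z + y = 0. Then L(x, x̄, z, y) ≥ f(x) + g(x̄) + v(−(Ax + Bx̄ − b); λ, β). -/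
open RealInnerProductSpace

/-- Under the dual-slack identity `λ + βz + y = 0` and `ρ ≥ β > 0`, the
augmented Lagrangian is bounded below by `f(x) + g(x̄) + v(−(Ax + Bx̄ − b))`, where
`v(w) = λᵀw + (β/2)‖w‖²` is the slack-penalty term. -/
theorem auglag_lower_bound_via_v {nx nxb m : ℕ}
    (f : EuclideanSpace ℝ (Fin nx) → ℝ) (g : EuclideanSpace ℝ (Fin nxb) → ℝ)
    (A : EuclideanSpace ℝ (Fin nx) →L[ℝ] EuclideanSpace ℝ (Fin m))
    (B : EuclideanSpace ℝ (Fin nxb) →L[ℝ] EuclideanSpace ℝ (Fin m))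
    (b : EuclideanSpace ℝ (Fin m)) (lam : EuclideanSpace ℝ (Fin m))
    (ρ β : ℝ) (hβ : 0 < β) (hρβ : β ≤ ρ)
    (L : EuclideanSpace ℝ (Fin nx) → EuclideanSpace ℝ (Fin nxb) →
      EuclideanSpace ℝ (Fin m) → EuclideanSpace ℝ (Fin m) → ℝ)
    (hL : ∀ x xbar z y, L x xbar z y =
      f x + g xbar + ⟪y, A x + B xbar + z - b⟫ +
        (ρ / 2) * ‖A x + B xbar + z - b‖ ^ 2 + ⟪lam, z⟫ + (β / 2) * ‖z‖ ^ 2)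
    (v : EuclideanSpace ℝ (Fin m) → ℝ)
    (hv : ∀ w, v w = ⟪lam, w⟫ + (β / 2) * ‖w‖ ^ 2)
    (x : EuclideanSpace ℝ (Fin nx)) (xbar : EuclideanSpace ℝ (Fin nxb))
    (z y : EuclideanSpace ℝ (Fin m))
    (hdual : lam + β • z + y = 0) :
    L x xbar z y ≥ f x + g xbar + v (-(A x + B xbar - b)) := by
  have hy : y = -(lam + β • z) := (neg_eq_of_add_eq_zero_right hdual).symm
  have hw : -(A x + B xbar - b) = z - (A x + B xbar + z - b) := by abel
  rw [hL, hv, hw]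
  generalize A x + B xbar + z - b = r
  rw [hy, norm_sub_sq_real, inner_sub_right, inner_neg_left, inner_add_left,
    real_inner_smul_left]
  nlinarith [mul_nonneg (sub_nonneg.2 hρβ) (sq_nonneg ‖r‖)]
end

section
/- Let f : ℝ^{n_x} → ℝ and g : ℝ^{n_x̄} → ℝ be bounded below, say f ≥ f_lb and g ≥ g_lb, and define the augmented Lagrangian L(x, x̄, z, y) = f(x) + g(x̄) + yᵀ(Ax + Bx̄ + z − b) + (ρ/2)‖Ax + Bx̄ + z − b‖² + λᵀz + (β/2)‖z‖². If ρ ≥ β > 0 and λ + β·z + y = 0, then L(x, x̄, z, y) ≥ f_lb + g_lb − ‖λ‖²/(2β). -/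
open RealInnerProductSpace

/-- If `f ≥ f_lb`, `g ≥ g_lb`, `ρ ≥ β > 0` and the dual-slack identity
`λ + βz + y = 0` holds, then the augmented Lagrangian is bounded below by
`f_lb + g_lb − ‖λ‖²/(2β)`. -/
theorem auglag_lower_bound {nx nxb m : ℕ}
    (f : EuclideanSpace ℝ (Fin nx) → ℝ) (g : EuclideanSpace ℝ (Fin nxb) → ℝ)
    (flb glb : ℝ) (hf : ∀ x, flb ≤ f x) (hg : ∀ xbar, glb ≤ g xbar)
    (A : EuclideanSpace ℝ (Fin nx) →L[ℝ] EuclideanSpace ℝ (Fin m))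
    (B : EuclideanSpace ℝ (Fin nxb) →L[ℝ] EuclideanSpace ℝ (Fin m))
    (b : EuclideanSpace ℝ (Fin m)) (lam : EuclideanSpace ℝ (Fin m))
    (ρ β : ℝ) (hβ : 0 < β) (hρβ : β ≤ ρ)
    (L : EuclideanSpace ℝ (Fin nx) → EuclideanSpace ℝ (Fin nxb) →
      EuclideanSpace ℝ (Fin m) → EuclideanSpace ℝ (Fin m) → ℝ)
    (hL : ∀ x xbar z y, L x xbar z y =
      f x + g xbar + ⟪y, A x + B xbar + z - b⟫ +
        (ρ / 2) * ‖A x + B xbar + z - b‖ ^ 2 + ⟪lam, z⟫ + (β / 2) * ‖z‖ ^ 2)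
    (x : EuclideanSpace ℝ (Fin nx)) (xbar : EuclideanSpace ℝ (Fin nxb))
    (z y : EuclideanSpace ℝ (Fin m))
    (hdual : lam + β • z + y = 0) :
    L x xbar z y ≥ flb + glb - ‖lam‖ ^ 2 / (2 * β) := by
  rw [hL]
  have h1 := hf x
  have h2 := hg xbar
  generalize A x + B xbar + z - b = r
  have hy : y = -(lam + β • z) := (neg_eq_of_add_eq_zero_right hdual).symm
  subst hy
  have h3 : 0 ≤ ‖β • (z - r) + lam‖ ^ 2 := sq_nonneg _
  have h4 : ‖β • (z - r) + lam‖ ^ 2 = β ^ 2 * (‖z‖ ^ 2 - 2 * inner ℝ z r + ‖r‖ ^ 2)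
      + 2 * β * (inner ℝ lam z - inner ℝ lam r) + ‖lam‖ ^ 2 := by
    rw [norm_add_sq_real, norm_smul, mul_pow, norm_sub_sq_real, real_inner_smul_left,
      real_inner_comm lam (z - r), inner_sub_right, Real.norm_eq_abs, sq_abs]
    ring
  have h5 : inner ℝ (-(lam + β • z)) r = -inner ℝ lam r - β * inner ℝ z r := by
    rw [inner_neg_left, inner_add_left, real_inner_smul_left]
    ring
  rw [h4] at h3
  rw [h5]
  have h6 : 0 ≤ (ρ - β) * ‖r‖ ^ 2 := mul_nonneg (by linarith) (sq_nonneg _)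
  have h7 := div_nonneg h3 (by positivity : (0:ℝ) ≤ 2 * β)
  have h8 : (β ^ 2 * (‖z‖ ^ 2 - 2 * inner ℝ z r + ‖r‖ ^ 2)
      + 2 * β * (inner ℝ lam z - inner ℝ lam r) + ‖lam‖ ^ 2) / (2 * β)
      = β / 2 * (‖z‖ ^ 2 - 2 * inner ℝ z r + ‖r‖ ^ 2)
      + (inner ℝ lam z - inner ℝ lam r) + ‖lam‖ ^ 2 / (2 * β) := by
    field_simp
  rw [h8] at h7
  linarith
end

section
/- Let f : ℝ^{n_x} → ℝ and g : ℝ^{n_x̄} → ℝ with g convex and differentiable, and define the augmented Lagrangian L(x, x̄, z, y) = f(x) + g(x̄) + yᵀ(Ax + Bx̄ + z − b) + (ρ/2)‖Ax + Bx̄ + z − b‖² + λᵀz + (β/2)‖z‖² with ρ = 2β, β > 0. Fix (x, x̄, z, y) with λ + β·z + y = 0, and let x⁺ satisfy L(x⁺, x̄, z, y) ≤ L(x, x̄, z, y). Let x̄⁺ be a global minimizer of x̄' ↦ L(x⁺, x̄', z, y), let z⁺ = −(ρ/(ρ+β))·(Ax⁺ + Bx̄⁺ − b + y/ρ) − (1/(ρ+β))·λ,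 and let y⁺ = y + ρ·(Ax⁺ + Bx̄⁺ + z⁺ − b). Then L(x⁺, x̄⁺, z⁺, y⁺) ≤ L(x, x̄, z, y) − β·‖B(x̄⁺ − x̄)‖² − (β/2)·‖z⁺ − z‖². -/
open RealInnerProductSpace

/-- One full inner ADMM iteration (inexact x-update that does not increase
`L`, exact x̄-update, closed-form z-update, dual y-update), with `ρ = 2β` and the
dual-slack identity `λ + βz + y = 0`, decreases the augmented Lagrangian by at least
`β‖B(x̄⁺ − x̄)‖² + (β/2)‖z⁺ − z‖²`. -/
theorem inner_iteration_decrease {nx nxb m : ℕ}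
    (f : EuclideanSpace ℝ (Fin nx) → ℝ) (g : EuclideanSpace ℝ (Fin nxb) → ℝ)
    (hgconv : ConvexOn ℝ Set.univ g) (hgdiff : Differentiable ℝ g)
    (A : EuclideanSpace ℝ (Fin nx) →L[ℝ] EuclideanSpace ℝ (Fin m))
    (B : EuclideanSpace ℝ (Fin nxb) →L[ℝ] EuclideanSpace ℝ (Fin m))
    (b : EuclideanSpace ℝ (Fin m)) (lam : EuclideanSpace ℝ (Fin m))
    (ρ β : ℝ) (hβ : 0 < β) (hρβ : ρ = 2 * β)
    (L : EuclideanSpace ℝ (Fin nx) → EuclideanSpace ℝ (Fin nxb) →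
      EuclideanSpace ℝ (Fin m) → EuclideanSpace ℝ (Fin m) → ℝ)
    (hL : ∀ x xbar z y, L x xbar z y =
      f x + g xbar + ⟪y, A x + B xbar + z - b⟫ +
        (ρ / 2) * ‖A x + B xbar + z - b‖ ^ 2 + ⟪lam, z⟫ + (β / 2) * ‖z‖ ^ 2)
    (x : EuclideanSpace ℝ (Fin nx)) (xbar : EuclideanSpace ℝ (Fin nxb))
    (z y : EuclideanSpace ℝ (Fin m))
    (hdual : lam + β • z + y = 0)
    (xp : EuclideanSpace ℝ (Fin nx))
    (hx : L xp xbar z y ≤ L x xbar z y)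
    (xbarp : EuclideanSpace ℝ (Fin nxb))
    (hxbar : ∀ xbar', L xp xbarp z y ≤ L xp xbar' z y)
    (zp : EuclideanSpace ℝ (Fin m))
    (hzp : zp = -((ρ / (ρ + β)) • (A xp + B xbarp - b + ρ⁻¹ • y)) - (ρ + β)⁻¹ • lam)
    (yp : EuclideanSpace ℝ (Fin m))
    (hyp : yp = y + ρ • (A xp + B xbarp + zp - b)) :
    L xp xbarp zp yp ≤
      L x xbar z y - β * ‖B (xbarp - xbar)‖ ^ 2 - (β / 2) * ‖zp - z‖ ^ 2 := by
  subst hρβ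
  have hlam : lam = -(β • z) - y := by
    have : lam = (lam + β • z + y) - (β • z) - y := by abel
    rw [this, hdual]; simp
  -- x̄-step
  have h1 : L xp xbarp z y + β * ‖B (xbarp - xbar)‖ ^ 2 ≤ L xp xbar z y := by
    have key : ∀ t : ℝ, 0 < t → t < 1 →
        L xp xbarp z y + (1 - t) * (β * ‖B (xbarp - xbar)‖ ^ 2) ≤ L xp xbar z y := by
      intro t ht0 ht1
      have hm := hxbar ((1 - t) • xbarp + t • xbar)
      have hg := hgconv.2 (Set.mem_univ xbarp) (Set.mem_univ xbar)
        (by linarith : 0 ≤ 1 - t) ht0.le (by ring)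
      simp only [smul_eq_mul] at hg
      rw [hL, hL] at hm
      rw [hL, hL]
      obtain ⟨p, hp⟩ : ∃ p, p = A xp + B xbarp + z - b := ⟨_, rfl⟩
      obtain ⟨q, hq⟩ : ∃ q, q = B (xbarp - xbar) := ⟨_, rfl⟩
      have e1 : A xp + B ((1 - t) • xbarp + t • xbar) + z - b = p - t • q := by
        rw [hp, hq]; simp only [map_add, map_smul, map_sub]; module
      have e2 : A xp + B xbar + z - b = p - q := by
        rw [hp, hq]; simp only [map_sub]; module
      rw [e1, ← hp] at hm
      rw [e2, ← hp, ← hq]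
      simp only [norm_sub_sq_real, inner_sub_right, inner_smul_right, norm_smul, mul_pow,
        Real.norm_eq_abs, sq_abs] at hm ⊢
      refine le_of_mul_le_mul_left ?_ ht0
      linarith
    have hc : Filter.Tendsto (fun t : ℝ => L xp xbarp z y + (1 - t) * (β * ‖B (xbarp - xbar)‖ ^ 2))
        (nhdsWithin 0 (Set.Ioi 0))
        (nhds (L xp xbarp z y + (1 - 0) * (β * ‖B (xbarp - xbar)‖ ^ 2))) := by
      apply Filter.Tendsto.mono_left _ nhdsWithin_le_nhds
      apply Continuous.tendsto (f := fun t : ℝ =>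
        L xp xbarp z y + (1 - t) * (β * ‖B (xbarp - xbar)‖ ^ 2))
      fun_prop
    have := le_of_tendsto hc (by
      filter_upwards [Ioo_mem_nhdsGT (zero_lt_one : (0 : ℝ) < 1)] with t ht
      exact key t ht.1 ht.2)
    linarith
  -- z- and y-steps
  have h2 : L xp xbarp zp yp = L xp xbarp z y - β * ‖zp - z‖ ^ 2 := by
    obtain ⟨w, hw⟩ : ∃ w, w = zp - z := ⟨_, rfl⟩
    have hz : zp = z + w := by rw [hw]; abel
    have e1 : A xp + B xbarp + z - b = (-(3 / 2) : ℝ) • w := by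
      have h3 : (3 : ℝ) • zp = -((2 : ℝ) • (A xp + B xbarp - b)) + z := by
        rw [hzp, hlam]
        match_scalars <;> field_simp <;> ring
      have h4 : A xp + B xbarp - b = (1 / 2 : ℝ) • (z - (3 : ℝ) • zp) := by
        rw [h3]; module
      have h5 : A xp + B xbarp + z - b = (A xp + B xbarp - b) + z := by abel
      rw [h5, h4, hw]; module
    have e2 : A xp + B xbarp + zp - b = (-(1 / 2) : ℝ) • w := by
      have : A xp + B xbarp + zp - b = (A xp + B xbarp + z - b) + w := by rw [hz]; abel
      rw [this, e1]; module
    have e3 : yp = y - β • w := by rw [hyp, e2]; module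
    rw [hL, hL, e1, e2, ← hw, e3, hlam, hz]
    simp only [norm_add_sq_real, inner_sub_left, inner_neg_left, inner_add_right, inner_smul_right,
      inner_smul_left, norm_smul, mul_pow, Real.norm_eq_abs, sq_abs, real_inner_self_eq_norm_sq,
      conj_trivial]
    ring
  rw [h2]
  have : 0 ≤ β * ‖zp - z‖ ^ 2 := by positivity
  linarith
end
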